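/- Let I ⊆ ℝ be a nondegenerate interval, n ∈ ℕ, and let ω be an n-dimensional positive Chebyshev system over I. If a function f : I → ℝ is ω-Jensen convex on I, then f is (r,ω)-convex on I for every r ∈ ℚ₊ⁿ (every n-tuple of positive rationals). -/

import Mathlib

/-- `Phi ω x` is the determinant `det(ωᵢ(xⱼ))` of an `n`-tuple of functions
evaluated at an `n`-tuple of points. -/
noncomputable def Phi {n : ℕ} (ω : Fin n → ℝ → ℝ) (x : Fin n → ℝ) : ℝ :=
  (Matrix.of fun i j => ω i (x j)).det

/-- `ω` is an `n`-dimensional positive Chebyshev system over `H`: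
`Phi ω` is positive on all strictly increasing `n`-tuples of elements of `H`. -/
def IsPosChebyshev {n : ℕ} (ω : Fin n → ℝ → ℝ) (H : Set ℝ) : Prop :=
  ∀ x : Fin n → ℝ, StrictMono x → (∀ j, x j ∈ H) → 0 < Phi ω x

/-- The partial sum `t₁ + ⋯ + tⱼ` (empty for `j = 0`, everything for `j = n`). -/
noncomputable def psum {n : ℕ} (t : Fin n → ℝ) (j : Fin (n + 1)) : ℝ :=
  ∑ i ∈ Finset.univ.filter (fun i : Fin n => (i : ℕ) < (j : ℕ)), t i

/-- `f` is `(t,ω)`-convex on `J`: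
`Φ_{(ω,f)}(x, x+t₁h, x+(t₁+t₂)h, …, x+(t₁+⋯+tₙ)h) ≥ 0`
for all `x ∈ J` and `h > 0` with `x+(t₁+⋯+tₙ)h ∈ J`. -/
def TOmegaConvexOn {n : ℕ} (ω : Fin n → ℝ → ℝ) (t : Fin n → ℝ) (J : Set ℝ) (f : ℝ → ℝ) : Prop :=
  ∀ x ∈ J, ∀ h : ℝ, 0 < h → x + psum t (Fin.last n) * h ∈ J →
    0 ≤ Phi (Fin.snoc ω f) (fun j => x + psum t j * h)

/-!
Let `z` be increasing with `n + 2` nodes and let `w` be its `n` interior nodes. Deleting one node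
of `z` gives an `(n + 1)`-tuple, and these are linked by a three-term Plücker relation: up to
factors `Φ_ω > 0`, the determinant `Φ_{(ω,f)}` of the tuple without an interior node is the sum of
those of the tuple without its last and of the tuple without its first node. Both sides are
unchanged when a combination of the `ωᵢ` is subtracted from `f`, so `f` may be assumed to vanish on
`w`, where the relation is read off from the Laplace expansion.

A rational `r` has a common denominator, so the nodes in question lie on an arithmetic progression.
As long as they skip a point of it, insert that point; the relation then reduces the claim to two
tuples of smaller span, and Jensen convexity is the case where no point is skipped.
-/

section Determinants

variable {n : ℕ}

theorem Phi_snoc_eq_sum_removeNth (ω : Fin n → ℝ → ℝ) (f : ℝ → ℝ) (s : Fin (n + 1) → ℝ) :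
    Phi (Fin.snoc ω f) s =
      ∑ j : Fin (n + 1), (-1) ^ (n + (j : ℕ)) * f (s j) * Phi ω (j.removeNth s) := by
  simp only [Phi, Matrix.det_succ_row _ (Fin.last n), Matrix.of_apply, Fin.snoc_last, Fin.val_last]
  refine Finset.sum_congr rfl fun j _ => ?_
  congr 2
  ext a b
  simp [Fin.removeNth]

theorem Phi_snoc_sub_sum_smul (ω : Fin n → ℝ → ℝ) (f : ℝ → ℝ) (c : Fin n → ℝ)
    (s : Fin (n + 1) → ℝ) :
    Phi (Fin.snoc ω (f - ∑ i, c i • ω i)) s = Phi (Fin.snoc ω f) s := by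
  let M : Matrix (Fin (n + 1)) (Fin (n + 1)) ℝ :=
    Matrix.of fun i j => (Fin.snoc ω f : Fin (n + 1) → ℝ → ℝ) i (s j)
  let d : Fin (n + 1) → ℝ := Fin.snoc (-c) 1
  have hrow : (Matrix.of fun i j =>
      (Fin.snoc ω (f - ∑ i, c i • ω i) : Fin (n + 1) → ℝ → ℝ) i (s j)) =
        M.updateRow (Fin.last n) (∑ k, d k • M k) := by
    ext i j
    cases i using Fin.lastCases with
    | last => simp [M, d, Fin.sum_univ_castSucc, sub_eq_neg_add]
    | cast i => simp [M]
  calc Phi (Fin.snoc ω (f - ∑ i, c i • ω i)) s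
      = d (Fin.last n) • M.det := by rw [Phi, hrow, Matrix.det_updateRow_sum]
    _ = Phi (Fin.snoc ω f) s := by simp [d, M, Phi]

theorem exists_sum_mul_eq_of_Phi_ne_zero {ω : Fin n → ℝ → ℝ} {y : Fin n → ℝ} (hy : Phi ω y ≠ 0)
    (v : Fin n → ℝ) : ∃ c : Fin n → ℝ, ∀ j, ∑ i, c i * ω i (y j) = v j := by
  have hM : IsUnit (Matrix.of fun i j => ω i (y j)) :=
    (Matrix.isUnit_iff_isUnit_det _).mpr (isUnit_iff_ne_zero.mpr hy)
  obtain ⟨c, hc⟩ := Matrix.vecMul_surjective_iff_isUnit.mpr hM v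
  exact ⟨c, congrFun hc⟩

theorem Phi_snoc_of_interior_eq_zero (ω : Fin (n + 1) → ℝ → ℝ) (f : ℝ → ℝ) (s : Fin (n + 2) → ℝ)
    (hf : ∀ j, j ≠ 0 → j ≠ Fin.last (n + 1) → f (s j) = 0) :
    Phi (Fin.snoc ω f) s =
      (-1) ^ (n + 1) * f (s 0) * Phi ω (Fin.tail s) +
        f (s (Fin.last (n + 1))) * Phi ω (Fin.init s) := by
  have hinterior (j : Fin n) : f (s j.castSucc.succ) = 0 :=
    hf _ (Fin.succ_ne_zero _) (by simp [← Fin.succ_last, (Fin.castSucc_lt_last j).ne])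
  have hsign : (-1 : ℝ) ^ (n + 1 + (n + 1)) = 1 := Even.neg_one_pow ⟨n + 1, rfl⟩
  rw [Phi_snoc_eq_sum_removeNth, Fin.sum_univ_succ, Fin.sum_univ_castSucc]
  simp [hinterior, hsign]

theorem Phi_snoc_removeNth_mul_of_interior_eq_zero (ω : Fin (n + 1) → ℝ → ℝ) (g : ℝ → ℝ)
    (z : Fin (n + 3) → ℝ) (hg : ∀ j, j ≠ 0 → j ≠ Fin.last (n + 2) → g (z j) = 0)
    {k : Fin (n + 3)} (hk₀ : k ≠ 0) (hk : k ≠ Fin.last (n + 2)) :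
    Phi (Fin.snoc ω g) (k.removeNth z) * Phi ω (Fin.tail (Fin.init z)) =
      Phi (Fin.snoc ω g) (Fin.init z) * Phi ω (Fin.tail (k.removeNth z)) +
        Phi (Fin.snoc ω g) (Fin.tail z) * Phi ω (Fin.init (k.removeNth z)) := by
  have hg_init (j : Fin (n + 2)) (hj : j ≠ 0) : g (Fin.init z j) = 0 :=
    hg _ (Fin.castSucc_ne_zero_iff.mpr hj) (Fin.castSucc_lt_last j).ne
  have hg_tail (j : Fin (n + 2)) (hj : j ≠ Fin.last (n + 1)) : g (Fin.tail z j) = 0 :=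
    hg _ (Fin.succ_ne_zero j) (by rwa [← Fin.succ_last, Fin.succ_inj.ne])
  have hinit : Phi (Fin.snoc ω g) (Fin.init z) =
      (-1) ^ (n + 1) * g (z 0) * Phi ω (Fin.tail (Fin.init z)) := by
    rw [Phi_snoc_of_interior_eq_zero ω g (Fin.init z) fun j hj₀ _ => hg_init j hj₀,
      hg_init _ Fin.last_pos.ne', zero_mul, add_zero]
    rfl
  have htail : Phi (Fin.snoc ω g) (Fin.tail z) =
      g (z (Fin.last (n + 2))) * Phi ω (Fin.tail (Fin.init z)) := by
    rw [Phi_snoc_of_interior_eq_zero ω g (Fin.tail z) fun j _ hj => hg_tail j hj,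
      hg_tail _ Fin.last_pos.ne, mul_zero, zero_mul, zero_add, Fin.tail_init_eq_init_tail]
    rfl
  have hremove : Phi (Fin.snoc ω g) (k.removeNth z) =
      (-1) ^ (n + 1) * g (z 0) * Phi ω (Fin.tail (k.removeNth z)) +
        g (z (Fin.last (n + 2))) * Phi ω (Fin.init (k.removeNth z)) := by
    rw [Phi_snoc_of_interior_eq_zero ω g (k.removeNth z) fun j hj₀ hj =>
      hg _ (Fin.succAbove_ne_zero hk₀ hj₀) (Fin.succAbove_ne_last hk hj)]
    simp only [Fin.removeNth_apply, Fin.succAbove_ne_zero_zero hk₀,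
      Fin.succAbove_ne_last_last hk]
  rw [hinit, htail, hremove]
  ring

theorem Phi_snoc_removeNth_mul (ω : Fin (n + 1) → ℝ → ℝ) (f : ℝ → ℝ) (z : Fin (n + 3) → ℝ)
    (hz : Phi ω (Fin.tail (Fin.init z)) ≠ 0) {k : Fin (n + 3)} (hk₀ : k ≠ 0)
    (hk : k ≠ Fin.last (n + 2)) :
    Phi (Fin.snoc ω f) (k.removeNth z) * Phi ω (Fin.tail (Fin.init z)) =
      Phi (Fin.snoc ω f) (Fin.init z) * Phi ω (Fin.tail (k.removeNth z)) +
        Phi (Fin.snoc ω f) (Fin.tail z) * Phi ω (Fin.init (k.removeNth z)) := by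
  obtain ⟨c, hc⟩ := exists_sum_mul_eq_of_Phi_ne_zero hz (f ∘ Fin.tail (Fin.init z))
  have hinterior (j : Fin (n + 3)) (hj₀ : j ≠ 0) (hj : j ≠ Fin.last (n + 2)) :
      (f - ∑ i, c i • ω i) (z j) = 0 := by
    obtain ⟨j, rfl⟩ := Fin.exists_castSucc_eq.mpr hj
    obtain ⟨j, rfl⟩ := Fin.exists_succ_eq.mpr (Fin.castSucc_ne_zero_iff.mp hj₀)
    simpa [Fin.tail, Fin.init, sub_eq_zero] using (hc j).symm
  simpa only [Phi_snoc_sub_sum_smul] using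
    Phi_snoc_removeNth_mul_of_interior_eq_zero ω _ z hinterior hk₀ hk

theorem IsPosChebyshev.Phi_snoc_removeNth_nonneg {ω : Fin n → ℝ → ℝ} {H : Set ℝ}
    (hω : IsPosChebyshev ω H) {f : ℝ → ℝ} {z : Fin (n + 2) → ℝ} (hz : StrictMono z)
    (hzH : ∀ j, z j ∈ H) (hinit : 0 ≤ Phi (Fin.snoc ω f) (Fin.init z))
    (htail : 0 ≤ Phi (Fin.snoc ω f) (Fin.tail z)) (k : Fin (n + 2)) :
    0 ≤ Phi (Fin.snoc ω f) (k.removeNth z) := by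
  by_cases hk₀ : k = 0
  · simpa [hk₀] using htail
  by_cases hk : k = Fin.last (n + 1)
  · simpa [hk] using hinit
  cases n with
  | zero => exact absurd (Fin.eq_one_of_ne_zero k hk₀) hk
  | succ n =>
    have hpos {e : Fin (n + 1) → Fin (n + 3)} (he : StrictMono e) : 0 < Phi ω (z ∘ e) :=
      hω _ (hz.comp he) fun _ => hzH _
    have hmiddle : 0 < Phi ω (Fin.tail (Fin.init z)) :=
      hpos (Fin.strictMono_castSucc.comp Fin.strictMono_succ)
    have htail' : 0 < Phi ω (Fin.tail (k.removeNth z)) :=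
      hpos ((Fin.strictMono_succAbove k).comp Fin.strictMono_succ)
    have hinit' : 0 < Phi ω (Fin.init (k.removeNth z)) :=
      hpos ((Fin.strictMono_succAbove k).comp Fin.strictMono_castSucc)
    refine nonneg_of_mul_nonneg_left ?_ hmiddle
    rw [Phi_snoc_removeNth_mul ω f z hmiddle.ne' hk₀ hk]
    positivity

end Determinants

section Grid

variable {n : ℕ}

theorem eq_add_val_or_exists_gap {s : Fin (n + 1) → ℕ} (hs : StrictMono s) :
    (∀ j, s j = s 0 + j) ∨ ∃ i : Fin n, s i.castSucc + 1 < s i.succ := by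
  by_cases hgap : ∃ i : Fin n, s i.castSucc + 1 < s i.succ
  · exact .inr hgap
  · refine .inl fun j => ?_
    induction j using Fin.induction with
    | zero => simp
    | succ i ih =>
      have hlt : s i.castSucc < s i.succ := hs i.castSucc_lt_succ
      have hle : s i.succ ≤ s i.castSucc + 1 := not_lt.mp fun h => hgap ⟨i, h⟩
      simp only [Fin.val_castSucc, Fin.val_succ] at ih ⊢
      omega

theorem strictMono_nat_tuple_induction {P : (Fin (n + 1) → ℕ) → Prop}
    (consecutive : ∀ a : ℕ, P fun j => a + j)
    (removeNth : ∀ (z : Fin (n + 2) → ℕ) (k : Fin (n + 2)), StrictMono z → k ≠ 0 →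
      k ≠ Fin.last (n + 1) → P (Fin.init z) → P (Fin.tail z) → P (k.removeNth z))
    {s : Fin (n + 1) → ℕ} (hs : StrictMono s) : P s := by
  induction hd : s (Fin.last n) - s 0 using Nat.strong_induction_on generalizing s with
  | _ d ih =>
  obtain hcons | ⟨i, hi⟩ := eq_add_val_or_exists_gap hs
  · rw [funext hcons]
    exact consecutive (s 0)
  · set k : Fin (n + 2) := i.castSucc.succ with hk
    let z : Fin (n + 2) → ℕ := k.insertNth (s i.castSucc + 1) s
    have hz : StrictMono z := Fin.strictMono_insertNth hs i _ (Nat.lt_succ_self _) hi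
    have hk₀ : k ≠ 0 := Fin.succ_ne_zero _
    have hkl : k ≠ Fin.last (n + 1) := by
      simp [hk, ← Fin.succ_last, (Fin.castSucc_lt_last i).ne]
    have hzs : k.removeNth z = s := Fin.removeNth_insertNth _ _ _
    have hz₀ : z 0 = s 0 := by
      rw [← hzs, Fin.removeNth_apply, Fin.succAbove_ne_zero_zero hk₀]
    have hzl : z (Fin.last (n + 1)) = s (Fin.last n) := by
      rw [← hzs, Fin.removeNth_apply, Fin.succAbove_ne_last_last hkl]
    have hfirst : z 0 < z (Fin.succ 0) := hz (Fin.succ_pos 0)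
    have hlast : z (Fin.last n).castSucc < z (Fin.last (n + 1)) := hz (Fin.castSucc_lt_last _)
    have hspan : z 0 < z (Fin.last (n + 1)) := hz Fin.last_pos
    rw [← hzs]
    refine removeNth z k hz hk₀ hkl (ih _ ?_ (hz.comp Fin.strictMono_castSucc) rfl)
      (ih _ ?_ (hz.comp Fin.strictMono_succ) rfl)
    · change z (Fin.last n).castSucc - z 0 < d
      omega
    · change z (Fin.last (n + 1)) - z (Fin.succ 0) < d
      omega

end Grid

section Psum

variable {n : ℕ}

theorem psum_eq_partialSum (t : Fin n → ℝ) : psum t = Fin.partialSum t := by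
  ext j
  induction j using Fin.induction with
  | zero => simp [psum]
  | succ k ih =>
    have hfilter : Finset.univ.filter (fun i : Fin n => (i : ℕ) < (k.succ : ℕ)) =
        insert k (Finset.univ.filter fun i : Fin n => (i : ℕ) < (k.castSucc : ℕ)) := by
      ext i
      simp [le_iff_eq_or_lt, Fin.ext_iff]
    rw [Fin.partialSum_succ, ← ih, psum, hfilter, Finset.sum_insert (by simp), add_comm, psum]

theorem psum_natCast (a : Fin n → ℕ) (j : Fin (n + 1)) :
    psum (fun i => (a i : ℝ)) j = (Fin.partialSum a j : ℕ) := by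
  rw [psum_eq_partialSum]
  induction j using Fin.induction with
  | zero => simp
  | succ i ih => simp [Fin.partialSum_succ, ih]

theorem psum_one (j : Fin (n + 1)) : psum (fun _ : Fin n => (1 : ℝ)) j = (j : ℕ) := by
  rw [psum_eq_partialSum]
  induction j using Fin.induction with
  | zero => simp
  | succ i ih => simp [Fin.partialSum_succ, ih]

theorem psum_const_mul (c : ℝ) (t : Fin n → ℝ) (j : Fin (n + 1)) :
    psum (fun i => c * t i) j = c * psum t j := by
  simp only [psum, Finset.mul_sum]

theorem strictMono_partialSum {M : Type*} [AddMonoid M] [Preorder M] [AddLeftStrictMono M]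
    {a : Fin n → M} (ha : ∀ i, 0 < a i) :
    StrictMono (Fin.partialSum a) :=
  Fin.strictMono_iff_lt_succ.mpr fun i => by
    rw [Fin.partialSum_succ]
    exact lt_add_of_pos_right _ (ha i)

end Psum

section Convexity

variable {n : ℕ} {ω : Fin n → ℝ → ℝ} {I : Set ℝ} {f : ℝ → ℝ}

theorem TOmegaConvexOn.const_mul {t : Fin n → ℝ} (hf : TOmegaConvexOn ω t I f) {c : ℝ}
    (hc : 0 < c) : TOmegaConvexOn ω (fun i => c * t i) I f := by
  intro x hx h hh hend
  have hnode (j : Fin (n + 1)) : psum (fun i => c * t i) j * h = psum t j * (c * h) := by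
    rw [psum_const_mul]
    ring
  simp only [hnode] at hend ⊢
  exact hf x hx (c * h) (mul_pos hc hh) hend

theorem TOmegaConvexOn.Phi_snoc_grid_nonneg (hI : I.OrdConnected) (hω : IsPosChebyshev ω I)
    (hf : TOmegaConvexOn ω (fun _ => 1) I f) {x δ : ℝ} (hδ : 0 < δ) {s : Fin (n + 1) → ℕ}
    (hs : StrictMono s) (hsI : ∀ j, x + s j * δ ∈ I) :
    0 ≤ Phi (Fin.snoc ω f) fun j => x + s j * δ := by
  have hgrid : StrictMono fun m : ℕ => x + m * δ := fun a b hab => by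
    have : (a : ℝ) < b := Nat.cast_lt.mpr hab
    dsimp only
    gcongr
  refine strictMono_nat_tuple_induction
    (P := fun s => (∀ j, x + s j * δ ∈ I) → 0 ≤ Phi (Fin.snoc ω f) fun j => x + s j * δ)
    (fun a haI => ?consecutive) (fun z k hz hk₀ hk hinit htail hsI => ?removeNth) hs hsI
  case consecutive =>
    have hnode (j : Fin (n + 1)) :
        x + (a + j : ℕ) * δ = x + a * δ + psum (fun _ : Fin n => (1 : ℝ)) j * δ := by
      rw [psum_one]
      push_cast
      ring
    simp only [hnode] at haI ⊢
    exact hf _ (by simpa [psum_one] using haI 0) δ hδ (haI (Fin.last n))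
  case removeNth =>
    have hz₀ : x + z 0 * δ ∈ I := by
      simpa [Fin.removeNth_apply, Fin.succAbove_ne_zero_zero hk₀] using hsI 0
    have hzl : x + z (Fin.last (n + 1)) * δ ∈ I := by
      simpa [Fin.removeNth_apply, Fin.succAbove_ne_last_last hk] using hsI (Fin.last n)
    have hzI (j : Fin (n + 2)) : x + z j * δ ∈ I :=
      hI.out hz₀ hzl ⟨hgrid.monotone (hz.monotone (Fin.zero_le j)),
        hgrid.monotone (hz.monotone (Fin.le_last j))⟩
    exact hω.Phi_snoc_removeNth_nonneg (hgrid.comp hz) hzI (hinit fun _ => hzI _)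
      (htail fun _ => hzI _) k

theorem TOmegaConvexOn.natCast_of_one (hI : I.OrdConnected) (hω : IsPosChebyshev ω I)
    (hf : TOmegaConvexOn ω (fun _ => 1) I f) {a : Fin n → ℕ} (ha : ∀ i, 0 < a i) :
    TOmegaConvexOn ω (fun i => (a i : ℝ)) I f := by
  intro x hx h hh hend
  have ha_mono := strictMono_partialSum ha
  simp only [psum_natCast] at hend ⊢
  refine hf.Phi_snoc_grid_nonneg hI hω hh ha_mono fun j => hI.out hx hend ⟨?_, ?_⟩
  · exact le_add_of_nonneg_right (by positivity)
  · have := ha_mono.monotone (Fin.le_last j)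
    gcongr

end Convexity

theorem exists_common_denominator {ι : Type*} [Finite ι] (r : ι → ℚ) (hr : ∀ i, 0 < r i) :
    ∃ q : ℕ, 0 < q ∧ ∃ a : ι → ℕ, (∀ i, 0 < a i) ∧ ∀ i, r i = (q : ℚ)⁻¹ * a i := by
  classical
  cases nonempty_fintype ι
  refine ⟨∏ i, (r i).den, Finset.prod_pos fun i _ => (r i).den_pos,
    fun i => (r i).num.toNat * ∏ j ∈ Finset.univ.erase i, (r j).den, fun i => ?_, fun i => ?_⟩
  · have := Rat.num_pos.mpr (hr i)
    exact Nat.mul_pos (by omega) (Finset.prod_pos fun j _ => (r j).den_pos)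
  · have hnum : ((r i).num.toNat : ℚ) = (r i).num :=
      mod_cast Int.toNat_of_nonneg (Rat.num_pos.mpr (hr i)).le
    have hden : (∏ j, ((r j).den : ℚ)) ≠ 0 :=
      Finset.prod_ne_zero_iff.mpr fun j _ => Nat.cast_ne_zero.mpr (r j).den_ne_zero
    push_cast
    rw [eq_inv_mul_iff_mul_eq₀ hden, hnum, ← Rat.mul_den_eq_num,
      ← Finset.mul_prod_erase _ _ (Finset.mem_univ i)]
    ring

/-- **Corollary 5.** If `f` is `ω`-Jensen convex on the nondegenerate interval `I`
(i.e. `(𝟏ₙ,ω)`-convex), then `f` is `(r,ω)`-convex on `I` for every `n`-tuple `r`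
of positive rationals. -/
theorem rational_tOmegaConvex_of_jensenConvex
    (n : ℕ) (hn : 0 < n) (I : Set ℝ) (hI : I.OrdConnected)
    (hne : ∃ a ∈ I, ∃ b ∈ I, a < b)
    (ω : Fin n → ℝ → ℝ) (hω : IsPosChebyshev ω I) (f : ℝ → ℝ)
    (hJ : TOmegaConvexOn ω (fun _ => (1 : ℝ)) I f) :
    ∀ r : Fin n → ℚ, (∀ i, 0 < r i) →
      TOmegaConvexOn ω (fun i => (r i : ℝ)) I f := by
  intro r hr
  obtain ⟨q, hq, a, ha, hra⟩ := exists_common_denominator r hr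
  have hr_eq : (fun i => (r i : ℝ)) = fun i => (q : ℝ)⁻¹ * a i := by
    ext i
    rw [hra]
    push_cast
    rfl
  rw [hr_eq]
  exact (hJ.natCast_of_one hI hω ha).const_mul (by positivity)
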